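/- arXiv:1411.5282 — 3 statements merged into one kernel-verified Lean document; each statement's English description precedes it below -/
import Mathlib

section
/- If G satisfies Condition NC for parameters f and l, then for every F ⊆ V with |F| ≤ f and every admissible choice of the sets C_i, the associated reduced graph contains at least one vertex k that has a directed path in the reduced graph to every vertex of the reduced graph. -/
/-- `p` is a directed path (a nonempty list of distinct vertices, with consecutive vertices
joined by edges of `E`) from some vertex of `W` to `x`, with at most `l` edges. -/
def IsWxPath {V : Type} (E : V → V → Prop) (l : ℕ) (W : Finset V) (x : V)
    (p : List V) : Prop :=
  p.Chain' E ∧ p.Nodup ∧ (∃ w ∈ W, p.head? = some w) ∧ p.getLast? = some x ∧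
    p.length ≤ l + 1

/-- `S` is an `l`-restricted `(W,x)`-vertex cut for the edge relation `E`:
`x ∉ S` and every `(W,x)`-path of length at most `l` contains a vertex of `S`. -/
def IsCut {V : Type} (E : V → V → Prop) (l : ℕ) (W : Finset V) (x : V)
    (S : Finset V) : Prop :=
  x ∉ S ∧ ∀ p : List V, IsWxPath E l W x p → ∃ s ∈ S, s ∈ p

/-- `A ⇒_l B`: there is `i ∈ B` with `κ_l(A, i) ≥ f + 1`, i.e. every
`l`-restricted `(A,i)`-vertex cut has at least `f + 1` vertices. -/
def ArrowL {V : Type} (E : V → V → Prop) (f l : ℕ) (A B : Finset V) : Prop :=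
  ∃ i ∈ B, ∀ S : Finset V, IsCut E l A i S → f + 1 ≤ S.card

/-- Edge relation of the subgraph induced on the complement of `F`. -/
def inducedE {V : Type} (E : V → V → Prop) (F : Finset V) : V → V → Prop :=
  fun u v => u ∉ F ∧ v ∉ F ∧ E u v

/-- `L, C, R, F` form a partition of the vertex set into four pairwise disjoint sets. -/
def IsPartition4 {V : Type} [Fintype V] [DecidableEq V] (L C R F : Finset V) : Prop :=
  L ∪ C ∪ R ∪ F = Finset.univ ∧ Disjoint L C ∧ Disjoint L R ∧ Disjoint L F ∧
    Disjoint C R ∧ Disjoint C F ∧ Disjoint R F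

/-- Condition NC for parameters `f` and `l`: for every partition `L, C, R, F` of the
vertex set with `L, R` nonempty and `|F| ≤ f`, in the induced subgraph `G_F` either
`R ∪ C ⇒_l L` or `L ∪ C ⇒_l R`. -/
def CondNC {V : Type} [Fintype V] [DecidableEq V] (E : V → V → Prop) (f l : ℕ) : Prop :=
  ∀ L C R F : Finset V, IsPartition4 L C R F → L.Nonempty → R.Nonempty → F.card ≤ f →
    ArrowL (inducedE E F) f l (R ∪ C) L ∨ ArrowL (inducedE E F) f l (L ∪ C) R

/-- There is a directed path (nonempty list of distinct vertices) of length at most `l`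
from `u` to `i` in `E` all of whose vertices avoid the set `Avoid`. -/
def HasPathLe {V : Type} (E : V → V → Prop) (l : ℕ) (Avoid : Finset V) (u i : V) : Prop :=
  ∃ p : List V, p.Chain' E ∧ p.Nodup ∧ p.head? = some u ∧ p.getLast? = some i ∧
    p.length ≤ l + 1 ∧ ∀ v ∈ p, v ∉ Avoid

/-- Edge relation of the reduced graph associated with `F` and the choice `C`:
an edge `(u, i)` (both outside `F`) whenever there is a directed path of length at most `l`
from `u` to `i` in `G` whose vertices avoid `F ∪ C i`. -/
def reducedEdge {V : Type} [DecidableEq V] (E : V → V → Prop) (l : ℕ) (F : Finset V)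
    (C : V → Finset V) : V → V → Prop :=
  fun u i => u ∉ F ∧ i ∉ F ∧ HasPathLe E l (F ∪ C i) u i

/-- The choice `C` is admissible for `F`: for each `i ∉ F`, `C i ⊆ N_i^{l-} \ {i}`
and `|C i| ≤ f`. -/
def AdmissibleC {V : Type} (E : V → V → Prop) (l f : ℕ) (F : Finset V)
    (C : V → Finset V) : Prop :=
  ∀ i, i ∉ F → (C i).card ≤ f ∧ ∀ u ∈ C i, u ≠ i ∧ HasPathLe E l ∅ u i

/-- `K` is a source component of the directed graph with vertex set `VS` and edge relation
`Rel`: a strongly connected component no vertex outside of which has a directed path to it. -/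
def IsSourceComponent {V : Type} (Rel : V → V → Prop) (VS : Finset V) (K : Finset V) : Prop :=
  K.Nonempty ∧ K ⊆ VS ∧
    (∀ u ∈ K, ∀ v ∈ K, Relation.ReflTransGen Rel u v) ∧
    (∀ v ∈ VS, v ∉ K → ∀ u ∈ K, ¬ Relation.ReflTransGen Rel v u)

/-!
If no vertex of a finite digraph reaches all the others, some two vertices have no common ancestor;
their ancestor sets `L` and `R` are then disjoint, and no edge enters either of them. For the
reduced graph, Condition NC applied to `L`, `R`, `F` and the remaining vertices excludes this: it
makes some `κ_l` to a vertex `i` of `L` or `R` exceed `f`, so the at most `f` vertices of `C i` are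
not a cut, and a path of `G_F` that avoids `C i` is an edge of the reduced graph entering that set.
-/

section Roots

variable {α : Type*} {r : α → α → Prop} {U : Finset α}

theorem exists_root_of_common_ancestor (hU : U.Nonempty)
    (hanc : ∀ i ∈ U, ∀ j ∈ U,
      ∃ w ∈ U, Relation.ReflTransGen r w i ∧ Relation.ReflTransGen r w j) :
    ∃ k ∈ U, ∀ i ∈ U, Relation.ReflTransGen r k i := by
  have : Nonempty U := hU.to_subtype
  have hdir : Directed (Function.swap (Relation.ReflTransGen r)) (Subtype.val : U → α) := by
    rintro ⟨i, hi⟩ ⟨j, hj⟩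
    obtain ⟨w, hw, hwi, hwj⟩ := hanc i hi j hj
    exact ⟨⟨w, hw⟩, hwi, hwj⟩
  obtain ⟨⟨k, hk⟩, hroot⟩ := hdir.finset_le Finset.univ
  exact ⟨k, hk, fun i hi => hroot ⟨i, hi⟩ (Finset.mem_univ _)⟩

theorem exists_root_of_disjoint_entered (hU : U.Nonempty) (htail : ∀ ⦃a b⦄, r a b → a ∈ U)
    (hent : ∀ L ⊆ U, ∀ R ⊆ U, L.Nonempty → R.Nonempty → Disjoint L R →
      (∃ a ∉ L, ∃ b ∈ L, r a b) ∨ ∃ a ∉ R, ∃ b ∈ R, r a b) :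
    ∃ k ∈ U, ∀ i ∈ U, Relation.ReflTransGen r k i := by
  classical
  refine exists_root_of_common_ancestor hU fun i hi j hj => ?_
  let ancestors (x : α) : Finset α := {u ∈ U | Relation.ReflTransGen r u x}
  have mem_ancestors {u x : α} : u ∈ ancestors x ↔ u ∈ U ∧ Relation.ReflTransGen r u x :=
    Finset.mem_filter
  have self_mem {x : α} (hx : x ∈ U) : x ∈ ancestors x := mem_ancestors.mpr ⟨hx, .refl⟩
  have not_entered (x : α) : ¬ ∃ a ∉ ancestors x, ∃ b ∈ ancestors x, r a b := by
    rintro ⟨a, ha, b, hb, hab⟩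
    exact ha (mem_ancestors.mpr ⟨htail hab, .head hab (mem_ancestors.mp hb).2⟩)
  have hmeet : ¬ Disjoint (ancestors i) (ancestors j) := fun hdisj =>
    (hent _ (Finset.filter_subset _ _) _ (Finset.filter_subset _ _) ⟨i, self_mem hi⟩
      ⟨j, self_mem hj⟩ hdisj).elim (not_entered i) (not_entered j)
  obtain ⟨w, hwi, hwj⟩ := Finset.not_disjoint_iff.mp hmeet
  exact ⟨w, (mem_ancestors.mp hwi).1, (mem_ancestors.mp hwi).2, (mem_ancestors.mp hwj).2⟩

end Roots

section Paths

variable {V : Type} {E : V → V → Prop} {f l : ℕ} {A B : Finset V}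

theorem ArrowL.lt_card (h : ArrowL E f l A B) (hAB : Disjoint A B) : f < A.card := by
  obtain ⟨i, hi, hcut⟩ := h
  refine hcut A ⟨Finset.disjoint_right.mp hAB hi, ?_⟩
  rintro p ⟨-, -, ⟨w, hw, hhead⟩, -⟩
  exact ⟨w, hw, List.mem_of_mem_head? hhead⟩

theorem ArrowL.exists_hasPathLe (h : ArrowL E f l A B) {S : V → Finset V}
    (hcard : ∀ i ∈ B, (S i).card ≤ f) (hself : ∀ i ∈ B, i ∉ S i) :
    ∃ i ∈ B, ∃ w ∈ A, HasPathLe E l (S i) w i := by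
  obtain ⟨i, hi, hcut⟩ := h
  have not_cut : ¬ IsCut E l A i (S i) := fun hS =>
    (hcut (S i) hS).not_gt (Nat.lt_succ_of_le (hcard i hi))
  obtain ⟨p, ⟨hchain, hnodup, ⟨w, hw, hhead⟩, hlast, hlen⟩, havoid⟩ :
      ∃ p, IsWxPath E l A i p ∧ ∀ v ∈ p, v ∉ S i := by
    by_contra! hno
    refine not_cut ⟨hself i hi, fun p hp => ?_⟩
    obtain ⟨v, hvp, hvS⟩ := hno p hp
    exact ⟨v, hvS, hvp⟩
  exact ⟨i, hi, w, hw, p, hchain, hnodup, hhead, hlast, hlen, havoid⟩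

variable {F S : Finset V} {C : V → Finset V} {u i : V}

theorem HasPathLe.target_notMem (h : HasPathLe E l S u i) : i ∉ S := by
  obtain ⟨p, -, -, -, hlast, -, havoid⟩ := h
  exact havoid i (List.mem_of_getLast? hlast)

variable [DecidableEq V]

theorem HasPathLe.of_inducedE (h : HasPathLe (inducedE E F) l S u i) (hu : u ∉ F) :
    HasPathLe E l (F ∪ S) u i := by
  obtain ⟨p, hchain, hnodup, hhead, hlast, hlen, havoid⟩ := h
  have hF : ∀ v ∈ p, v ∉ F :=
    hchain.induction (· ∉ F) p (fun _ _ hxy _ => hxy.2.1) fun _ =>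
      List.head_of_head?_eq_some hhead ▸ hu
  exact ⟨p, hchain.imp fun _ _ hxy => hxy.2.2, hnodup, hhead, hlast, hlen, fun v hv =>
    Finset.notMem_union.mpr ⟨hF v hv, havoid v hv⟩⟩

theorem ArrowL.exists_reducedEdge (h : ArrowL (inducedE E F) f l A B) (hAF : Disjoint A F)
    (hcard : ∀ i ∈ B, (C i).card ≤ f) (hself : ∀ i ∈ B, i ∉ C i) :
    ∃ a ∈ A, ∃ b ∈ B, reducedEdge E l F C a b := by
  obtain ⟨b, hb, a, ha, hpath⟩ := h.exists_hasPathLe hcard hself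
  have haF : a ∉ F := Finset.disjoint_left.mp hAF ha
  have hpathG : HasPathLe E l (F ∪ C b) a b := hpath.of_inducedE haF
  exact ⟨a, ha, b, hb, haF, (Finset.notMem_union.mp hpathG.target_notMem).1, hpathG⟩

end Paths

section ConditionNC

variable {V : Type} [Fintype V] [DecidableEq V] {E : V → V → Prop} {f l : ℕ}
  {L R F : Finset V} {C : V → Finset V}

theorem isPartition4_compl (hLR : Disjoint L R) (hLF : Disjoint L F) (hRF : Disjoint R F) :
    IsPartition4 L (L ∪ R ∪ F)ᶜ R F := by
  simp only [IsPartition4, Finset.disjoint_left, Finset.eq_univ_iff_forall, Finset.mem_union,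
    Finset.mem_compl] at *
  grind

theorem CondNC.arrowL_compl (hNC : CondNC E f l) (hL : L.Nonempty) (hR : R.Nonempty)
    (hLR : Disjoint L R) (hLF : Disjoint L F) (hRF : Disjoint R F) (hF : F.card ≤ f) :
    ArrowL (inducedE E F) f l (L ∪ F)ᶜ L ∨ ArrowL (inducedE E F) f l (R ∪ F)ᶜ R := by
  have hRC : R ∪ (L ∪ R ∪ F)ᶜ = (L ∪ F)ᶜ := by
    rw [Finset.disjoint_left] at hLR hRF; grind [Finset.mem_compl]
  have hLC : L ∪ (L ∪ R ∪ F)ᶜ = (R ∪ F)ᶜ := by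
    rw [Finset.disjoint_left] at hLR hLF; grind [Finset.mem_compl]
  simpa only [hRC, hLC] using hNC _ _ _ _ (isPartition4_compl hLR hLF hRF) hL hR hF

theorem CondNC.lt_card [Nontrivial V] (hNC : CondNC E f l) : f < Fintype.card V := by
  have lt_of_arrow {x : V} (h : ArrowL (inducedE E ∅) f l ({x} ∪ ∅)ᶜ {x}) :
      f < Fintype.card V :=
    (h.lt_card (by simp)).trans_le (Finset.card_le_univ _)
  obtain ⟨a, b, hab⟩ := exists_pair_ne V
  exact (hNC.arrowL_compl (Finset.singleton_nonempty a) (Finset.singleton_nonempty b)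
    (Finset.disjoint_singleton.mpr hab) (Finset.disjoint_empty_right _)
    (Finset.disjoint_empty_right _) (Nat.zero_le f)).elim lt_of_arrow lt_of_arrow

theorem CondNC.exists_reducedEdge_entering (hNC : CondNC E f l) (hL : L.Nonempty)
    (hR : R.Nonempty) (hLR : Disjoint L R) (hLF : Disjoint L F) (hRF : Disjoint R F)
    (hF : F.card ≤ f) (hcard : ∀ i ∉ F, (C i).card ≤ f) (hself : ∀ i ∉ F, i ∉ C i) :
    (∃ a ∉ L, ∃ b ∈ L, reducedEdge E l F C a b) ∨
      ∃ a ∉ R, ∃ b ∈ R, reducedEdge E l F C a b := by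
  have entering {B : Finset V} (hBF : Disjoint B F)
      (h : ArrowL (inducedE E F) f l (B ∪ F)ᶜ B) :
      ∃ a ∉ B, ∃ b ∈ B, reducedEdge E l F C a b := by
    have hBF' : ∀ i ∈ B, i ∉ F := fun _ hi => Finset.disjoint_left.mp hBF hi
    obtain ⟨a, ha, hedge⟩ := h.exists_reducedEdge
      (disjoint_compl_left.mono_right Finset.subset_union_right)
      (fun i hi => hcard i (hBF' i hi)) fun i hi => hself i (hBF' i hi)
    exact ⟨a, fun haB => Finset.mem_compl.mp ha (Finset.mem_union_left F haB), hedge⟩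
  exact (hNC.arrowL_compl hL hR hLR hLF hRF hF).imp (entering hLF) (entering hRF)

theorem stmt_4_general [Nontrivial V] (hNC : CondNC E f l) (hF : F.card ≤ f)
    (hcard : ∀ i ∉ F, (C i).card ≤ f) (hself : ∀ i ∉ F, i ∉ C i) :
    ∃ k, k ∉ F ∧ ∀ i, i ∉ F → Relation.ReflTransGen (reducedEdge E l F C) k i := by
  have hne : Fᶜ.Nonempty := by
    rw [← Finset.card_pos, Finset.card_compl]
    exact Nat.sub_pos_of_lt (hF.trans_lt hNC.lt_card)
  have htail : ∀ ⦃a b⦄, reducedEdge E l F C a b → a ∈ Fᶜ := fun _ _ hab =>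
    Finset.mem_compl.mpr hab.1
  simpa only [Finset.mem_compl] using
    exists_root_of_disjoint_entered hne htail fun L hLF R hRF hL hR hLR =>
      hNC.exists_reducedEdge_entering hL hR hLR (Finset.subset_compl_iff_disjoint_right.mp hLF)
        (Finset.subset_compl_iff_disjoint_right.mp hRF) hF hcard hself

end ConditionNC

/-- If `G` satisfies Condition NC, then for every `F` with `|F| ≤ f` and every admissible
choice of the sets `C_i`, the associated reduced graph has a vertex `k` with a directed path
(in the reduced graph) to every vertex of the reduced graph. -/
theorem stmt_4 {V : Type} [Fintype V] [DecidableEq V] (E : V → V → Prop)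
    (hself : ∀ v, E v v) (hn : 2 ≤ Fintype.card V) (f l : ℕ) (hl : 1 ≤ l)
    (hNC : CondNC E f l) :
    ∀ F : Finset V, F.card ≤ f → ∀ C : V → Finset V, AdmissibleC E l f F C →
      ∃ k, k ∉ F ∧ ∀ i, i ∉ F →
        Relation.ReflTransGen (reducedEdge E l F C) k i := by
  have : Nontrivial V := Fintype.one_lt_card_iff_nontrivial.mp hn
  exact fun F hF C hC => stmt_4_general hNC hF (fun i hi => (hC i hi).1)
    fun i hi hiC => ((hC i hi).2 i hiC).1 rfl
end

section
/- Suppose l ≥ n − 1 (so the length restriction on paths is vacuous). Then G satisfies Condition NC for parameters f and l if and only if G satisfies Condition 1 for parameter f. -/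
/-- Condition 1 (for parameter `f`): for every partition `L, C, R, F` of the vertex set with
`L, R` nonempty and `|F| ≤ f`, either `L ∪ C` contains at least `f + 1` distinct in-neighbors
of `R`, or `R ∪ C` contains at least `f + 1` distinct in-neighbors of `L`. -/
def Cond1 {V : Type} [Fintype V] [DecidableEq V] (E : V → V → Prop) [DecidableRel E]
    (f : ℕ) : Prop :=
  ∀ L C R F : Finset V, IsPartition4 L C R F → L.Nonempty → R.Nonempty → F.card ≤ f →
    f + 1 ≤ ((L ∪ C).filter (fun u => ∃ v ∈ R, E u v)).card ∨
    f + 1 ≤ ((R ∪ C).filter (fun u => ∃ v ∈ L, E u v)).card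

/-!
Write `∂B` for the set of vertices outside `B` with an edge into `B`. If `x ∈ B` and `B` is disjoint
from `A`, then `∂B` is an `(A, x)`-cut, whatever the length bound: a path from `A` to `x` enters
`B` through `∂B`. Conversely, once `l ≥ n - 1`, every `l`-restricted `(A, x)`-cut `S` contains such
a boundary, that of the set `B` of vertices that still reach `x` when `S` is deleted.

Condition 1 says `|∂L| > f` or `|∂R| > f`, boundaries being taken in `G_F`. An arrow `R ∪ C ⇒ L`
bounds `|∂L|` from below, so NC implies Condition 1. If both arrows fail, small cuts provide
nonempty `L' ⊆ L` and `R' ⊆ R` with `|∂L'|, |∂R'| ≤ f`, and moving the other vertices of `L` and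
`R` to `C` gives a partition violating Condition 1.
-/

section InBoundary

variable {α : Type*} [Fintype α] {r : α → α → Prop} {B : Finset α}

open Classical in
/-- The in-boundary of `B` for the edge relation `r`: the vertices outside `B` that have an edge
into `B`. These sets serve as canonical vertex cuts. -/
noncomputable def inBoundary (r : α → α → Prop) (B : Finset α) : Finset α :=
  {u | u ∉ B ∧ ∃ v ∈ B, r u v}

lemma mem_inBoundary {u : α} : u ∈ inBoundary r B ↔ u ∉ B ∧ ∃ v ∈ B, r u v := by
  simp only [inBoundary, Finset.mem_filter_univ]

lemma forall_mem_of_isChain_of_forall_notMem_inBoundary {p : List α} {x : α} (hp : p.IsChain r)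
    (hlast : p.getLast? = some x) (hx : x ∈ B) (havoid : ∀ u ∈ p, u ∉ inBoundary r B) :
    ∀ u ∈ p, u ∈ B := by
  refine (List.IsChain.iff_mem.1 hp).backwards_induction (· ∈ B) p ?_ fun hne ↦ ?_
  · rintro u v ⟨hu, -, huv⟩ hv
    by_contra huB
    exact havoid u hu (mem_inBoundary.2 ⟨huB, v, hv, huv⟩)
  · rwa [List.getLast_of_getLast?_eq_some hlast]

end InBoundary

section Cuts

variable {V : Type} [Fintype V] {r : V → V → Prop} {f l : ℕ} {A B S : Finset V} {x : V}

lemma isCut_inBoundary (hx : x ∈ B) (hAB : Disjoint A B) : IsCut r l A x (inBoundary r B) := by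
  refine ⟨fun h ↦ (mem_inBoundary.1 h).1 hx, ?_⟩
  rintro p ⟨hchain, -, ⟨w, hwA, hhead⟩, hlast, -⟩
  by_contra! havoid
  have hsub := forall_mem_of_isChain_of_forall_notMem_inBoundary hchain hlast hx
    fun u hu hu' ↦ havoid u hu' hu
  exact Finset.disjoint_left.1 hAB hwA (hsub w (List.mem_of_head? hhead))

lemma IsWxPath.exists_cons {u v : V} {p : List V} (hp : IsWxPath r l {v} x p) (huv : r u v)
    (hl : Fintype.card V - 1 ≤ l) : ∃ q, IsWxPath r l {u} x q ∧ q ⊆ u :: p := by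
  obtain ⟨hchain, hnodup, ⟨v', hv', hhead⟩, hlast, -⟩ := hp
  obtain rfl := Finset.mem_singleton.1 hv'
  have hlength {q : List V} (hq : q.Nodup) : q.length ≤ l + 1 := by
    have := hq.length_le_card
    omega
  by_cases hu : u ∈ p
  · obtain ⟨s, t, rfl⟩ := List.append_of_mem hu
    have hnodup' : (u :: t).Nodup := hnodup.of_append_right
    refine ⟨u :: t, ⟨hchain.right_of_append, hnodup', ⟨u, Finset.mem_singleton_self u, rfl⟩, ?_,
      hlength hnodup'⟩, List.cons_subset_cons u fun a ha ↦ ?_⟩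
    · rwa [List.getLast?_append_cons] at hlast
    · exact List.mem_append_right s (List.mem_cons_of_mem u ha)
  · have hnodup' : (u :: p).Nodup := List.nodup_cons.2 ⟨hu, hnodup⟩
    refine ⟨u :: p, ⟨?_, hnodup', ⟨u, Finset.mem_singleton_self u, rfl⟩, ?_, hlength hnodup'⟩,
      List.Subset.refl _⟩
    · exact List.isChain_cons.2 ⟨by simpa [hhead] using huv, hchain⟩
    · simp [List.getLast?_cons, hlast]

lemma IsCut.exists_inBoundary_subset (hS : IsCut r l A x S) (hl : Fintype.card V - 1 ≤ l) :
    ∃ B, x ∈ B ∧ Disjoint A B ∧ inBoundary r B ⊆ S := by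
  classical
  obtain ⟨hxS, hcut⟩ := hS
  let B : Finset V := {u | ∃ p, IsWxPath r l {u} x p ∧ ∀ s ∈ S, s ∉ p}
  have mem_B {u : V} : u ∈ B ↔ ∃ p, IsWxPath r l {u} x p ∧ ∀ s ∈ S, s ∉ p :=
    Finset.mem_filter_univ u
  refine ⟨B, mem_B.2 ⟨[x], ⟨.singleton x, by simp⟩, ?_⟩, Finset.disjoint_left.2 fun u huA huB ↦ ?_,
    fun u hu ↦ ?_⟩
  · rintro s hs hsx
    exact hxS (List.mem_singleton.1 hsx ▸ hs)
  · obtain ⟨p, ⟨hchain, hnodup, ⟨w, hw, hhead⟩, hend⟩, havoid⟩ := mem_B.1 huB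
    obtain rfl := Finset.mem_singleton.1 hw
    obtain ⟨s, hs, hsp⟩ := hcut p ⟨hchain, hnodup, ⟨w, huA, hhead⟩, hend⟩
    exact havoid s hs hsp
  · obtain ⟨huB, v, hv, huv⟩ := mem_inBoundary.1 hu
    obtain ⟨p, hp, havoid⟩ := mem_B.1 hv
    obtain ⟨q, hq, hqp⟩ := hp.exists_cons huv hl
    by_contra huS
    refine huB (mem_B.2 ⟨q, hq, fun s hs hsq ↦ ?_⟩)
    rcases List.mem_cons.1 (hqp hsq) with rfl | hsp
    · exact huS hs
    · exact havoid s hs hsp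

lemma ArrowL.lt_card_inBoundary (h : ArrowL r f l A B) (hAB : Disjoint A B) :
    f < (inBoundary r B).card := by
  obtain ⟨i, hi, hcut⟩ := h
  exact hcut _ (isCut_inBoundary hi hAB)

lemma exists_card_inBoundary_le_of_not_arrowL (h : ¬ArrowL r f l A B) (hx : x ∈ B)
    (hl : Fintype.card V - 1 ≤ l) :
    ∃ B', x ∈ B' ∧ Disjoint A B' ∧ (inBoundary r B').card ≤ f := by
  simp only [ArrowL, not_exists, not_and, not_forall, not_le] at h
  obtain ⟨S, hS, hcard⟩ := h x hx
  obtain ⟨B', hxB', hAB', hsub⟩ := hS.exists_inBoundary_subset hl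
  exact ⟨B', hxB', hAB', (Finset.card_le_card hsub).trans (Nat.lt_succ_iff.1 hcard)⟩

end Cuts

section Conditions

variable {V : Type} [Fintype V] [DecidableEq V] {E : V → V → Prop} {f l : ℕ}
  {L C R F : Finset V}

lemma isPartition4_iff : IsPartition4 L C R F ↔
    Disjoint L R ∧ Disjoint L F ∧ Disjoint R F ∧ C = (L ∪ R ∪ F)ᶜ := by
  simp only [IsPartition4, Finset.disjoint_left, Finset.ext_iff, Finset.mem_union,
    Finset.mem_univ, Finset.mem_compl]
  grind

lemma IsPartition4.symm (h : IsPartition4 L C R F) : IsPartition4 R C L F := by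
  obtain ⟨hLR, hLF, hRF, rfl⟩ := isPartition4_iff.1 h
  exact isPartition4_iff.2 ⟨hLR.symm, hRF, hLF, by rw [Finset.union_comm L R]⟩

lemma IsPartition4.union_eq_compl (h : IsPartition4 L C R F) : R ∪ C = (L ∪ F)ᶜ := by
  obtain ⟨hLR, -, hRF, rfl⟩ := isPartition4_iff.1 h
  ext v
  have hR : v ∈ R → v ∉ L ∪ F :=
    (Finset.disjoint_left.1 (Finset.disjoint_union_right.2 ⟨hLR.symm, hRF⟩) ·)
  simp only [Finset.mem_union, Finset.mem_compl] at hR ⊢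
  tauto

lemma filter_compl_union_eq_inBoundary [DecidableRel E] (hLF : Disjoint L F) :
    (L ∪ F)ᶜ.filter (fun u ↦ ∃ v ∈ L, E u v) = inBoundary (inducedE E F) L := by
  ext u
  have hF : ∀ v ∈ L, v ∉ F := fun _ ↦ (Finset.disjoint_left.1 hLF ·)
  simp only [mem_inBoundary, inducedE, Finset.mem_filter, Finset.mem_compl, Finset.mem_union]
  grind

lemma inBoundary_inducedE_sdiff (B : Finset V) :
    inBoundary (inducedE E F) (B \ F) = inBoundary (inducedE E F) B := by
  ext u
  simp only [mem_inBoundary, inducedE, Finset.mem_sdiff]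
  grind

lemma condNC_iff : CondNC E f l ↔ ∀ L R F : Finset V,
    Disjoint L R → Disjoint L F → Disjoint R F → L.Nonempty → R.Nonempty → F.card ≤ f →
      ArrowL (inducedE E F) f l (L ∪ F)ᶜ L ∨ ArrowL (inducedE E F) f l (R ∪ F)ᶜ R := by
  constructor
  · intro h L R F hLR hLF hRF hL hR hF
    have hpart := isPartition4_iff.2 ⟨hLR, hLF, hRF, rfl⟩
    simpa only [hpart.union_eq_compl, hpart.symm.union_eq_compl] using h L _ R F hpart hL hR hF
  · intro h L C R F hpart hL hR hF
    obtain ⟨hLR, hLF, hRF, -⟩ := isPartition4_iff.1 hpart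
    simpa only [hpart.union_eq_compl, hpart.symm.union_eq_compl] using h L R F hLR hLF hRF hL hR hF

lemma cond1_iff [DecidableRel E] : Cond1 E f ↔ ∀ L R F : Finset V,
    Disjoint L R → Disjoint L F → Disjoint R F → L.Nonempty → R.Nonempty → F.card ≤ f →
      f < (inBoundary (inducedE E F) L).card ∨ f < (inBoundary (inducedE E F) R).card := by
  constructor
  · intro h L R F hLR hLF hRF hL hR hF
    have hpart := isPartition4_iff.2 ⟨hLR, hLF, hRF, rfl⟩
    simpa only [hpart.union_eq_compl, hpart.symm.union_eq_compl,
      filter_compl_union_eq_inBoundary hLF, filter_compl_union_eq_inBoundary hRF,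
      Nat.lt_iff_add_one_le]
      using (h L _ R F hpart hL hR hF).symm
  · intro h L C R F hpart hL hR hF
    obtain ⟨hLR, hLF, hRF, -⟩ := isPartition4_iff.1 hpart
    simpa only [hpart.union_eq_compl, hpart.symm.union_eq_compl,
      filter_compl_union_eq_inBoundary hLF, filter_compl_union_eq_inBoundary hRF,
      Nat.lt_iff_add_one_le]
      using (h L R F hLR hLF hRF hL hR hF).symm

lemma exists_subset_card_inBoundary_le (hLF : Disjoint L F) (hL : L.Nonempty)
    (hl : Fintype.card V - 1 ≤ l) (h : ¬ArrowL (inducedE E F) f l (L ∪ F)ᶜ L) :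
    ∃ L' ⊆ L, L'.Nonempty ∧ (inBoundary (inducedE E F) L').card ≤ f := by
  obtain ⟨x, hx⟩ := hL
  obtain ⟨B, hxB, hdisj, hcard⟩ := exists_card_inBoundary_le_of_not_arrowL h hx hl
  have hB : B ⊆ L ∪ F := by
    simpa only [compl_compl] using Finset.subset_compl_iff_disjoint_left.2 hdisj
  refine ⟨B \ F, sdiff_le_iff'.2 hB,
    ⟨x, Finset.mem_sdiff.2 ⟨hxB, Finset.disjoint_left.1 hLF hx⟩⟩, ?_⟩
  rwa [inBoundary_inducedE_sdiff]

theorem CondNC.cond1 [DecidableRel E] (h : CondNC E f l) : Cond1 E f := by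
  rw [cond1_iff]
  intro L R F hLR hLF hRF hL hR hF
  have hdisj (B : Finset V) : Disjoint (B ∪ F)ᶜ B :=
    disjoint_compl_left.mono_right Finset.subset_union_left
  exact (condNC_iff.1 h L R F hLR hLF hRF hL hR hF).imp
    (·.lt_card_inBoundary (hdisj L)) (·.lt_card_inBoundary (hdisj R))

theorem Cond1.condNC [DecidableRel E] (h : Cond1 E f) (hl : Fintype.card V - 1 ≤ l) :
    CondNC E f l := by
  rw [condNC_iff]
  intro L R F hLR hLF hRF hL hR hF
  by_contra! ⟨hnL, hnR⟩
  obtain ⟨L', hL', hL'ne, hcardL⟩ := exists_subset_card_inBoundary_le hLF hL hl hnL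
  obtain ⟨R', hR', hR'ne, hcardR⟩ := exists_subset_card_inBoundary_le hRF hR hl hnR
  rcases cond1_iff.1 h L' R' F (hLR.mono hL' hR') (hLF.mono_left hL') (hRF.mono_left hR')
    hL'ne hR'ne hF with hlt | hlt
  · exact hlt.not_ge hcardL
  · exact hlt.not_ge hcardR

end Conditions

theorem stmt_9_general {V : Type} [Fintype V] [DecidableEq V] (E : V → V → Prop) [DecidableRel E]
    (f l : ℕ) (hl : Fintype.card V - 1 ≤ l) : CondNC E f l ↔ Cond1 E f :=
  ⟨CondNC.cond1, (·.condNC hl)⟩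

/-- When `l ≥ n - 1`, Condition NC (for `f, l`) is equivalent to Condition 1 (for `f`). -/
theorem stmt_9 {V : Type} [Fintype V] [DecidableEq V] (E : V → V → Prop) [DecidableRel E]
    (hself : ∀ v, E v v) (hn : 2 ≤ Fintype.card V) (f l : ℕ) (hl : 1 ≤ l)
    (hl' : Fintype.card V - 1 ≤ l) :
    CondNC E f l ↔ Cond1 E f :=
  stmt_9_general E f l hl'
end

section
/- Let (M_t)_{t≥1} be a sequence of N×N row-stochastic matrices and suppose there exist γ with 0 < γ ≤ 1 and an integer L ≥ 1 such that for every k ≥ 0 the block product P_k = M_{(k+1)L} M_{(k+1)L−1} ⋯ M_{kL+1} satisfies λ(P_k) ≤ 1 − γ. Then for every vector v ∈ ℝ^N, setting v^{(T)} = M_T M_{T−1} ⋯ M_1 v: (i) every coordinate of every v^{(T)} lies in the interval [min_i v_i, max_i v_i]; and (ii) there exists a constant c ∈ ℝ such that v^{(T)} converges, as T → ∞, to the vector all of whose coordinates equal c. -/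
/-- An `N × N` real matrix is row stochastic if its entries are nonnegative and each of its
rows sums to 1. -/
def RowStochastic {N : ℕ} (Q : Matrix (Fin N) (Fin N) ℝ) : Prop :=
  (∀ r c, 0 ≤ Q r c) ∧ ∀ r, ∑ c, Q r c = 1

/-- The coefficient of ergodicity `λ(Q) = 1 - min_{i₁,i₂} ∑_j min (Q i₁ j) (Q i₂ j)`. -/
noncomputable def ergLam {N : ℕ} (Q : Matrix (Fin N) (Fin N) ℝ) : ℝ :=
  1 - ⨅ p : Fin N × Fin N, ∑ j, min (Q p.1 j) (Q p.2 j)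

/-- `δ(Q) = max_j max_{i₁,i₂} |Q i₁ j - Q i₂ j|`. -/
noncomputable def ergDel {N : ℕ} (Q : Matrix (Fin N) (Fin N) ℝ) : ℝ :=
  ⨆ p : (Fin N × Fin N) × Fin N, |Q p.1.1 p.2 - Q p.1.2 p.2|

/-- The backward product `M_T * M_{T-1} * ⋯ * M_1` (and the identity for `T = 0`). -/
noncomputable def backProd {N : ℕ} (M : ℕ → Matrix (Fin N) (Fin N) ℝ) :
    ℕ → Matrix (Fin N) (Fin N) ℝ
  | 0 => 1
  | T + 1 => M (T + 1) * backProd M T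

/-- The block product `P_k = M_{(k+1)L} * M_{(k+1)L - 1} * ⋯ * M_{kL+1}`. -/
noncomputable def blockProd {N : ℕ} (M : ℕ → Matrix (Fin N) (Fin N) ℝ) (L k : ℕ) :
    Matrix (Fin N) (Fin N) ℝ :=
  ((List.range L).map fun s => M ((k + 1) * L - s)).prod

/-!
Averaging a vector `w` with the rows of a row stochastic matrix `Q` can only raise its minimum and
lower its maximum. Two rows `p`, `q` share the mass `∑ j, min (p j) (q j)`, which contributes
equally to both averages, so these differ by at most the remaining mass times `max w - min w`;
hence `Q` shrinks this oscillation by the factor `λ(Q)`. Along the iterates the intervals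
`[min, max]` are therefore nested, and their lengths at the times `K * L` are bounded by the
product of the `λ(P_k)`, `k < K`, times the initial length, which tends to `0`.
-/

section

open Filter Set Topology
open scoped Matrix

section Oscillation

variable {n : Type*}

/-- The oscillation `max w - min w` of a real vector with finitely many coordinates; it is `0` when
there are no coordinates. -/
noncomputable def osc (w : n → ℝ) : ℝ := (⨆ i, w i) - ⨅ i, w i

theorem mem_Icc_iInf_iSup [Finite n] (w : n → ℝ) (i : n) :
    w i ∈ Icc (⨅ j, w j) (⨆ j, w j) :=
  ⟨ciInf_le (finite_range w).bddBelow i, le_ciSup (finite_range w).bddAbove i⟩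

theorem osc_nonneg [Finite n] (w : n → ℝ) : 0 ≤ osc w := by
  rcases isEmpty_or_nonempty n with _ | ⟨⟨i⟩⟩
  · simp [osc]
  · exact sub_nonneg.2 <| (mem_Icc_iInf_iSup w i).1.trans (mem_Icc_iInf_iSup w i).2

theorem osc_le {w : n → ℝ} {a : ℝ} (ha : 0 ≤ a) (h : ∀ i j, w i - w j ≤ a) : osc w ≤ a := by
  rcases isEmpty_or_nonempty n with _ | _
  · simpa [osc] using ha
  · rw [osc, sub_le_iff_le_add']
    refine ciSup_le fun i => sub_le_iff_le_add.1 <| le_ciInf fun j => ?_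
    exact sub_le_comm.1 (h i j)

theorem exists_tendsto_const_of_monotone_iInf_of_antitone_iSup [Finite n] {ι : Type*}
    [Preorder ι] [IsDirectedOrder ι] {u : ι → n → ℝ} (hinf : Monotone fun t => ⨅ i, u t i)
    (hsup : Antitone fun t => ⨆ i, u t i) (hosc : ∀ ε > 0, ∃ t, osc (u t) < ε) :
    ∃ c : ℝ, Tendsto u atTop (𝓝 fun _ => c) := by
  obtain ⟨c, hc⟩ : ∃ c, ∀ t, c ∈ Icc (⨅ i, u t i) (⨆ i, u t i) :=
    ⟨_, mem_iInter.1 <| hinf.ciSup_mem_iInter_Icc_of_antitone hsup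
      fun t => sub_nonneg.1 (osc_nonneg (u t))⟩
  refine ⟨c, tendsto_pi_nhds.2 fun i => Metric.tendsto_nhds.2 fun ε hε => ?_⟩
  obtain ⟨t₀, ht₀⟩ := hosc ε hε
  filter_upwards [eventually_ge_atTop t₀] with t ht
  calc dist (u t i) c ≤ osc (u t) := Real.dist_le_of_mem_Icc (mem_Icc_iInf_iSup (u t) i) (hc t)
    _ ≤ osc (u t₀) := sub_le_sub (hsup ht) (hinf ht)
    _ < ε := ht₀

variable [Fintype n]

theorem dotProduct_sub_dotProduct_le_mul_osc {p q : n → ℝ} (hp : ∑ j, p j = 1)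
    (hq : ∑ j, q j = 1) (w : n → ℝ) :
    p ⬝ᵥ w - q ⬝ᵥ w ≤ (1 - ∑ j, min (p j) (q j)) * osc w := by
  set m : n → ℝ := fun j => min (p j) (q j)
  have hupper : (p - m) ⬝ᵥ w ≤ (1 - ∑ j, m j) * ⨆ j, w j := by
    rw [← hp, ← Finset.sum_sub_distrib, Finset.sum_mul]
    exact Finset.sum_le_sum fun j _ => mul_le_mul_of_nonneg_left (mem_Icc_iInf_iSup w j).2
      (sub_nonneg.2 (min_le_left _ _))
  have hlower : (1 - ∑ j, m j) * ⨅ j, w j ≤ (q - m) ⬝ᵥ w := by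
    rw [← hq, ← Finset.sum_sub_distrib, Finset.sum_mul]
    exact Finset.sum_le_sum fun j _ => mul_le_mul_of_nonneg_left (mem_Icc_iInf_iSup w j).1
      (sub_nonneg.2 (min_le_right _ _))
  calc p ⬝ᵥ w - q ⬝ᵥ w = (p - m) ⬝ᵥ w - (q - m) ⬝ᵥ w := by simp only [sub_dotProduct]; ring
    _ ≤ (1 - ∑ j, m j) * (⨆ j, w j) - (1 - ∑ j, m j) * ⨅ j, w j := sub_le_sub hupper hlower
    _ = (1 - ∑ j, m j) * osc w := (mul_sub _ _ _).symm

variable [DecidableEq n] {Q : Matrix n n ℝ}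

theorem mulVec_mem_Icc_iInf_iSup (hQ : Q ∈ Matrix.rowStochastic ℝ n) (w : n → ℝ) (i : n) :
    (Q *ᵥ w) i ∈ Icc (⨅ j, w j) (⨆ j, w j) :=
  (convex_Icc _ _).sum_mem (fun _ _ => Matrix.nonneg_of_mem_rowStochastic hQ)
    (Matrix.sum_row_of_mem_rowStochastic hQ i) fun j _ => mem_Icc_iInf_iSup w j

theorem iInf_le_iInf_mulVec (hQ : Q ∈ Matrix.rowStochastic ℝ n) (w : n → ℝ) :
    ⨅ i, w i ≤ ⨅ i, (Q *ᵥ w) i := by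
  rcases isEmpty_or_nonempty n with _ | _
  · simp
  · exact le_ciInf fun i => (mulVec_mem_Icc_iInf_iSup hQ w i).1

theorem iSup_mulVec_le_iSup (hQ : Q ∈ Matrix.rowStochastic ℝ n) (w : n → ℝ) :
    ⨆ i, (Q *ᵥ w) i ≤ ⨆ i, w i := by
  rcases isEmpty_or_nonempty n with _ | _
  · simp
  · exact ciSup_le fun i => (mulVec_mem_Icc_iInf_iSup hQ w i).2

end Oscillation

variable {N : ℕ} {Q : Matrix (Fin N) (Fin N) ℝ}

theorem rowStochastic_iff_mem : RowStochastic Q ↔ Q ∈ Matrix.rowStochastic ℝ (Fin N) :=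
  Matrix.mem_rowStochastic_iff_sum.symm

theorem one_sub_sum_min_le_ergLam (Q : Matrix (Fin N) (Fin N) ℝ) (i i' : Fin N) :
    1 - ∑ j, min (Q i j) (Q i' j) ≤ ergLam Q :=
  sub_le_sub_left (ciInf_le (finite_range fun p : Fin N × Fin N =>
    ∑ j, min (Q p.1 j) (Q p.2 j)).bddBelow (i, i')) 1

theorem ergLam_nonneg (hQ : RowStochastic Q) : 0 ≤ ergLam Q := by
  rcases isEmpty_or_nonempty (Fin N) with _ | ⟨⟨i⟩⟩
  · simp [ergLam]
  · simpa only [min_self, hQ.2, sub_self] using one_sub_sum_min_le_ergLam Q i i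

theorem osc_mulVec_le (hQ : RowStochastic Q) (w : Fin N → ℝ) :
    osc (Q *ᵥ w) ≤ ergLam Q * osc w :=
  osc_le (mul_nonneg (ergLam_nonneg hQ) (osc_nonneg w)) fun i i' =>
    (dotProduct_sub_dotProduct_le_mul_osc (hQ.2 i) (hQ.2 i') w).trans <|
      mul_le_mul_of_nonneg_right (one_sub_sum_min_le_ergLam Q i i') (osc_nonneg w)

section Products

variable {M : ℕ → Matrix (Fin N) (Fin N) ℝ}

theorem rowStochastic_backProd (hM : ∀ t, 1 ≤ t → RowStochastic (M t)) (T : ℕ) :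
    RowStochastic (backProd M T) := by
  simp only [rowStochastic_iff_mem] at hM ⊢
  induction T with
  | zero => exact one_mem _
  | succ T ih => exact mul_mem (hM _ T.succ_pos) ih

theorem rowStochastic_blockProd (hM : ∀ t, 1 ≤ t → RowStochastic (M t)) (L k : ℕ) :
    RowStochastic (blockProd M L k) := by
  simp only [rowStochastic_iff_mem] at hM ⊢
  refine Submonoid.list_prod_mem _ (List.forall_mem_map.2 fun s hs => hM _ ?_)
  have hsL : s < (k + 1) * L := (List.mem_range.1 hs).trans_le (Nat.le_mul_of_pos_left L k.succ_pos)
  omega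

theorem backProd_add (M : ℕ → Matrix (Fin N) (Fin N) ℝ) (m n : ℕ) :
    backProd M (m + n) =
      ((List.range n).map fun s => M (m + n - s)).prod * backProd M m := by
  induction n with
  | zero => simp
  | succ n ih =>
    have hindex (s : ℕ) : m + (n + 1) - (s + 1) = m + n - s := by omega
    rw [← add_assoc, backProd, ih, add_assoc, List.range_succ_eq_map]
    simp only [List.map_cons, List.map_map, List.prod_cons, Function.comp_def,
      Nat.succ_eq_add_one, hindex, Nat.sub_zero, Matrix.mul_assoc]

theorem backProd_succ_mul (M : ℕ → Matrix (Fin N) (Fin N) ℝ) (L k : ℕ) :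
    backProd M ((k + 1) * L) = blockProd M L k * backProd M (k * L) := by
  rw [blockProd, Nat.succ_mul, backProd_add]

theorem osc_backProd_mulVec_le_prod (hM : ∀ t, 1 ≤ t → RowStochastic (M t)) (L : ℕ)
    (v : Fin N → ℝ) (K : ℕ) :
    osc (backProd M (K * L) *ᵥ v) ≤ (∏ k ∈ Finset.range K, ergLam (blockProd M L k)) * osc v := by
  induction K with
  | zero => simp [backProd]
  | succ K ih =>
    have hP := rowStochastic_blockProd hM L K
    calc osc (backProd M ((K + 1) * L) *ᵥ v)
        = osc (blockProd M L K *ᵥ (backProd M (K * L) *ᵥ v)) := by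
          rw [backProd_succ_mul, Matrix.mulVec_mulVec]
      _ ≤ ergLam (blockProd M L K) * osc (backProd M (K * L) *ᵥ v) := osc_mulVec_le hP _
      _ ≤ ergLam (blockProd M L K) *
            ((∏ k ∈ Finset.range K, ergLam (blockProd M L k)) * osc v) :=
          mul_le_mul_of_nonneg_left ih (ergLam_nonneg hP)
      _ = (∏ k ∈ Finset.range (K + 1), ergLam (blockProd M L k)) * osc v := by
          rw [Finset.prod_range_succ]; ring

end Products

theorem tendsto_prod_range_zero_of_le {f : ℕ → ℝ} {r : ℝ} (hf : ∀ k, 0 ≤ f k)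
    (hfr : ∀ k, f k ≤ r) (hr : r < 1) :
    Tendsto (fun K => ∏ k ∈ Finset.range K, f k) atTop (𝓝 0) := by
  refine squeeze_zero (fun K => Finset.prod_nonneg fun k _ => hf k) (fun K => ?_)
    (tendsto_pow_atTop_nhds_zero_of_lt_one ((hf 0).trans (hfr 0)) hr)
  simpa using Finset.prod_le_prod (s := Finset.range K) (fun k _ => hf k) fun k _ => hfr k

theorem stmt_16_general (N : ℕ) (M : ℕ → Matrix (Fin N) (Fin N) ℝ)
    (hM : ∀ t, 1 ≤ t → RowStochastic (M t)) (L : ℕ)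
    (hprod : Tendsto (fun K => ∏ k ∈ Finset.range K, ergLam (blockProd M L k)) atTop (𝓝 0))
    (v : Fin N → ℝ) :
    (∀ T : ℕ, ∀ i : Fin N,
        (⨅ j, v j) ≤ (backProd M T *ᵥ v) i ∧ (backProd M T *ᵥ v) i ≤ ⨆ j, v j) ∧
      ∃ c : ℝ, Tendsto (fun T => backProd M T *ᵥ v) atTop (𝓝 fun _ => c) := by
  have hstep (T : ℕ) : backProd M (T + 1) *ᵥ v = M (T + 1) *ᵥ (backProd M T *ᵥ v) :=
    (Matrix.mulVec_mulVec ..).symm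
  have hstoch (T : ℕ) := rowStochastic_iff_mem.1 (hM (T + 1) T.succ_pos)
  have hback (T : ℕ) := rowStochastic_iff_mem.1 (rowStochastic_backProd hM T)
  refine ⟨fun T => mulVec_mem_Icc_iInf_iSup (hback T) v,
    exists_tendsto_const_of_monotone_iInf_of_antitone_iSup
      (monotone_nat_of_le_succ fun T => ?_) (antitone_nat_of_succ_le fun T => ?_) fun ε hε => ?_⟩
  · simpa only [hstep] using iInf_le_iInf_mulVec (hstoch T) (backProd M T *ᵥ v)
  · simpa only [hstep] using iSup_mulVec_le_iSup (hstoch T) (backProd M T *ᵥ v)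
  · have hbound : Tendsto (fun K => (∏ k ∈ Finset.range K, ergLam (blockProd M L k)) * osc v)
        atTop (𝓝 0) := by
      simpa only [zero_mul] using hprod.mul_const (osc v)
    obtain ⟨K, hK⟩ := (hbound.eventually_lt_const hε).exists
    exact ⟨K * L, (osc_backProd_mulVec_le_prod hM L v K).trans_lt hK⟩

end

/-- Under the block-contraction hypothesis of the convergence theorem, for every vector
`v ∈ ℝ^N` the iterates `v^{(T)} = M_T ⋯ M_1 v` stay in `[min_i v_i, max_i v_i]` and
converge to a constant vector `c • 1`. -/
theorem stmt_16 (N : ℕ) (M : ℕ → Matrix (Fin N) (Fin N) ℝ)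
    (hM : ∀ t, 1 ≤ t → RowStochastic (M t))
    (γ : ℝ) (hγ0 : 0 < γ) (hγ1 : γ ≤ 1) (L : ℕ) (hL : 1 ≤ L)
    (hblock : ∀ k : ℕ, ergLam (blockProd M L k) ≤ 1 - γ)
    (v : Fin N → ℝ) :
    (∀ T : ℕ, ∀ i : Fin N,
        (⨅ j, v j) ≤ (backProd M T).mulVec v i ∧ (backProd M T).mulVec v i ≤ ⨆ j, v j) ∧
      ∃ c : ℝ, Filter.Tendsto (fun T => (backProd M T).mulVec v) Filter.atTop
        (nhds fun _ => c) := by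
  exact stmt_16_general N M hM L (tendsto_prod_range_zero_of_le
    (fun k => ergLam_nonneg (rowStochastic_blockProd hM L k)) hblock (sub_lt_self 1 hγ0)) v
end
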